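/- arXiv:2401.03387 — 5 statements merged into one kernel-verified Lean document; each statement's English description precedes it below -/
import Mathlib

section
/- For every t ≥ √(2(n+2)) one has (t+1)^{−n}·V(t+1) − t^{−n}·V(t) ≤ 4·(t+1)^{−(n+2)}·χ(t+1) ≤ 2n·(t+1)^{−(n+2)}·V(t+1). -/
/-!
The quantity `F(s) = V(s) / s ^ n - 4 χ(s) / s ^ (n + 2)` is locally absolutely continuous on
`(0, ∞)`, and `2 s ^ (-n - 1)` times the soliton identity turns its a.e. derivative into
`F'(s) = -2 s ^ (-n - 1) χ(s) (1 - 2 (n + 2) / s ^ 2)`. The terms in `c` cancel, which is the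
integration by parts in the `χ`-term. Hence `F' ≤ 0` for `s ≥ √(2 (n + 2))`, and the fundamental
theorem of calculus for absolutely continuous functions gives `F(t + 1) ≤ F(t) ≤ V(t) / t ^ n`.

The second inequality is the bound `χ ≤ (n / 2) V` at the point `t + 1`. It is only assumed almost
everywhere, and passes to every point because `χ` is monotone and `V` is continuous.
-/

open MeasureTheory

/-- If `W` is a primitive of `w` on `(0, ∞)`, then it agrees there with a function `G`, namely
`x ↦ W a + ∫ s in a..x, w s`, that is absolutely continuous on `[a, b] ⊂ (0, ∞)` with derivative `w`
almost everywhere on it. -/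
lemma exists_absolutelyContinuous_primitive {W w : ℝ → ℝ}
    (hw : ∀ a b : ℝ, 0 < a → a ≤ b → IntervalIntegrable w volume a b)
    (hW : ∀ a b : ℝ, 0 < a → a ≤ b → W b - W a = ∫ s in a..b, w s)
    {a b : ℝ} (ha : 0 < a) (hab : a ≤ b) :
    ∃ G : ℝ → ℝ, (∀ x, 0 < x → G x = W x) ∧ AbsolutelyContinuousOnInterval G a b ∧
      ∀ᵐ x, x ∈ Set.uIcc a b → HasDerivAt G (w x) x := by
  refine ⟨fun x ↦ W a + ∫ s in a..x, w s, fun x hx ↦ ?_, ?_, ?_⟩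
  · rcases le_total a x with h | h
    · simp only [← hW a x ha h]
      ring
    · simp only [intervalIntegral.integral_symm x a, ← hW x a hx h]
      ring
  · exact (contDiffOn_const.absolutelyContinuousOnInterval (f := fun _ : ℝ ↦ W a)).fun_add
      ((hw a b ha hab).absolutelyContinuousOnInterval_intervalIntegral Set.left_mem_uIcc)
  · filter_upwards [(hw a b ha hab).ae_hasDerivAt_integral] with x hx hxab
    exact (hx hxab a Set.left_mem_uIcc).const_add (W a)

lemma absolutelyContinuous_div_pow {G : ℝ → ℝ} {a b : ℝ} (k : ℕ) (ha : 0 < a) (hab : a ≤ b)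
    (hG : AbsolutelyContinuousOnInterval G a b) :
    AbsolutelyContinuousOnInterval (fun x ↦ G x / x ^ k) a b := by
  have hp : ContDiffOn ℝ 1 (fun x : ℝ ↦ (x ^ k)⁻¹) (Set.uIcc a b) := by
    refine (contDiff_id.pow k).contDiffOn.inv fun x hx ↦ ?_
    rw [Set.uIcc_of_le hab] at hx
    exact pow_ne_zero _ (ha.trans_le hx.1).ne'
  simpa only [div_eq_mul_inv] using hG.fun_mul hp.absolutelyContinuousOnInterval

/-- An absolutely continuous function with a.e. nonpositive derivative does not increase. -/
lemma AbsolutelyContinuousOnInterval.le_of_ae_hasDerivAt_nonpos {F F' : ℝ → ℝ} {a b : ℝ}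
    (hab : a ≤ b) (hF : AbsolutelyContinuousOnInterval F a b)
    (hF' : ∀ᵐ x, x ∈ Set.uIcc a b → HasDerivAt F (F' x) x ∧ F' x ≤ 0) : F b ≤ F a := by
  have h : 0 ≤ ∫ x in a..b, -deriv F x := by
    refine intervalIntegral.integral_nonneg_of_ae_restrict hab ?_
    rw [Filter.EventuallyLE, ae_restrict_iff' measurableSet_Icc]
    filter_upwards [hF'] with x hx hxab
    obtain ⟨h1, h2⟩ := hx (Set.uIcc_of_le hab ▸ hxab)
    simpa [h1.deriv] using h2
  rw [intervalIntegral.integral_neg, hF.integral_deriv_eq_sub] at h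
  linarith

/-- Abstracted Cao–Zhou integrated inequality (Section 8): for nondecreasing
nonnegative `V, χ` with a.e. derivatives `v, c` satisfying the soliton identity
`(n/2)V(s) - (s/2)v(s) = χ(s) - (2/s)c(s)` and the bound `χ(s) ≤ (n/2)V(s)`,
for every `t ≥ √(2(n+2))` one has
`(t+1)⁻ⁿ V(t+1) - t⁻ⁿ V(t) ≤ 4(t+1)^{-(n+2)} χ(t+1) ≤ 2n(t+1)^{-(n+2)} V(t+1)`. -/
theorem integrated_soliton_volume_inequality
    (n : ℕ) (hn : 1 ≤ n) (V χ v c : ℝ → ℝ)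
    (hVmono : ∀ ⦃a b : ℝ⦄, 0 < a → a ≤ b → V a ≤ V b)
    (hVnonneg : ∀ s : ℝ, 0 < s → 0 ≤ V s)
    (hχmono : ∀ ⦃a b : ℝ⦄, 0 < a → a ≤ b → χ a ≤ χ b)
    (hχnonneg : ∀ s : ℝ, 0 < s → 0 ≤ χ s)
    (hvnonneg : ∀ s : ℝ, 0 < s → 0 ≤ v s)
    (hcnonneg : ∀ s : ℝ, 0 < s → 0 ≤ c s)
    (hvint : ∀ a b : ℝ, 0 < a → a ≤ b → IntervalIntegrable v volume a b)
    (hcint : ∀ a b : ℝ, 0 < a → a ≤ b → IntervalIntegrable c volume a b)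
    (hV : ∀ a b : ℝ, 0 < a → a ≤ b → V b - V a = ∫ s in a..b, v s)
    (hχ : ∀ a b : ℝ, 0 < a → a ≤ b → χ b - χ a = ∫ s in a..b, c s)
    (hid : ∀ᵐ s : ℝ ∂volume, 0 < s →
      (n / 2 : ℝ) * V s - s / 2 * v s = χ s - 2 / s * c s)
    (hbd : ∀ᵐ s : ℝ ∂volume, 0 < s → χ s ≤ (n / 2 : ℝ) * V s)
    (t : ℝ) (ht : Real.sqrt (2 * (n + 2)) ≤ t) :
    V (t + 1) / (t + 1) ^ n - V t / t ^ n ≤ 4 * χ (t + 1) / (t + 1) ^ (n + 2) ∧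
      4 * χ (t + 1) / (t + 1) ^ (n + 2) ≤
        2 * n * V (t + 1) / (t + 1) ^ (n + 2) := by
  have hn2 : (0 : ℝ) < 2 * (n + 2) := by positivity
  have ht0 : 0 < t := (Real.sqrt_pos.2 hn2).trans_le ht
  have htt : t ≤ t + 1 := by linarith
  have hT : 0 < t + 1 := by linarith
  constructor
  · obtain ⟨G, hGV, hGac, hGd⟩ := exists_absolutelyContinuous_primitive hvint hV ht0 htt
    obtain ⟨H, hHχ, hHac, hHd⟩ := exists_absolutelyContinuous_primitive hcint hχ ht0 htt
    have hFac := (absolutelyContinuous_div_pow n ht0 htt hGac).fun_sub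
      ((absolutelyContinuous_div_pow (n + 2) ht0 htt hHac).const_mul 4)
    have key := hFac.le_of_ae_hasDerivAt_nonpos
      (F' := fun s ↦ -(2 * χ s / s ^ (n + 3)) * (s ^ 2 - 2 * (n + 2))) htt (by
        filter_upwards [hGd, hHd, hid] with s hsG hsH hsid hs
        have hts : t ≤ s := (Set.uIcc_of_le htt ▸ hs).1
        have hs0 : 0 < s := ht0.trans_le hts
        constructor
        · have hd := ((hsG hs).fun_div (hasDerivAt_pow n s) (pow_ne_zero n hs0.ne')).fun_sub
            (((hsH hs).fun_div (hasDerivAt_pow (n + 2) s)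
              (pow_ne_zero (n + 2) hs0.ne')).const_mul 4)
          refine hd.congr_deriv ?_
          rw [hGV s hs0, hHχ s hs0]
          -- The identity solved for `v`.
          have hv : v s = (n * V s - 2 * χ s + 4 / s * c s) / s := by
            have := hsid hs0
            field_simp at this ⊢
            linarith
          rw [hv]
          obtain ⟨m, rfl⟩ : ∃ m, n = m + 1 := ⟨n - 1, by omega⟩
          simp only [Nat.add_sub_cancel, show m + 1 + 2 - 1 = m + 2 by omega]
          push_cast
          field_simp
          ring
        · have hs2 : 2 * ((n : ℝ) + 2) ≤ s ^ 2 :=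
            (Real.sqrt_le_left hs0.le).1 (ht.trans hts)
          have h1 : 0 ≤ 2 * χ s / s ^ (n + 3) := by
            have := hχnonneg s hs0
            positivity
          nlinarith [mul_nonneg h1 (sub_nonneg.2 hs2)])
    simp only [hGV _ ht0, hGV _ hT, hHχ _ ht0, hHχ _ hT] at key
    have h4 : 0 ≤ χ t / t ^ (n + 2) := div_nonneg (hχnonneg t ht0) (by positivity)
    rw [mul_div_assoc]
    linarith
  · have hle : χ (t + 1) ≤ n / 2 * V (t + 1) := by
      obtain ⟨G, hGV, hGac, -⟩ := exists_absolutelyContinuous_primitive hvint hV hT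
        (show t + 1 ≤ t + 2 by linarith)
      have hcont : Filter.Tendsto G (nhdsWithin (t + 1) (Set.Ioo (t + 1) (t + 2)))
          (nhds (G (t + 1))) := by
        refine (hGac.continuousOn (t + 1) Set.left_mem_uIcc).mono ?_
        exact Set.Ioo_subset_Icc_self.trans Set.Icc_subset_uIcc
      have hne : (nhdsWithin (t + 1) (Set.Ioo (t + 1) (t + 2))).NeBot :=
        left_nhdsWithin_Ioo_neBot (by linarith)
      rw [← hGV _ hT]
      refine ge_of_tendsto (hcont.const_mul _) ?_
      filter_upwards [self_mem_nhdsWithin] with b hb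
      -- A set of full measure is dense, so the bound holds at some `s` between `t + 1` and `b`.
      obtain ⟨s, hs, hsb⟩ := (Measure.dense_of_ae hbd).exists_between hb.1
      have hs0 : 0 < s := hT.trans hsb.1
      rw [hGV b (hT.trans hb.1)]
      calc χ (t + 1) ≤ χ s := hχmono hT hsb.1.le
        _ ≤ n / 2 * V s := hs hs0
        _ ≤ n / 2 * V b := by
          gcongr
          exact hVmono hs0 hsb.2.le
    gcongr ?_ / _
    linarith
end

section
/- There exists a constant c₀ > 0 depending only on n such that for every t ≥ c₀ one has V(t+1) ≤ 2·V(t). -/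
/-!
Solving the soliton identity for `v` and dropping the term `-2χ/s ≤ 0` gives
`v(s) ≤ n V(s)/s + 4 c(s)/s²` almost everywhere. Integrating over `[t, b]` with
`t + 1 < b < t + 2` and using monotonicity of `V`,
`V(b) - V(t) ≤ (b - t) n V(b)/t + (4/t²)(χ(b) - χ(t))`. If `b` is also chosen in the full-measure
set where `χ(b) ≤ (n/2) V(b)`, then `V(b) (1 - 2n/t - 2n/t²) ≤ V(t)`, and for `t ≥ 8n` the
factor is at least `1/2`. Hence `V(t+1) ≤ V(b) ≤ 2 V(t)`. Moving to such a `b > t + 1`, instead of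
working at `t + 1` itself, avoids extending the almost-everywhere bound on `χ` by continuity.
-/

open MeasureTheory

/-- Doubling inequality (Section 8): there is a constant `c₀ > 0` depending only
on `n` such that, for any nondecreasing nonnegative `V, χ` with a.e. derivatives
`v, c` satisfying the soliton identity and the bound `χ(s) ≤ (n/2)V(s)`, one has
`V(t+1) ≤ 2 V(t)` for all `t ≥ c₀`. -/
theorem volume_doubling_inequality (n : ℕ) (hn : 1 ≤ n) :
    ∃ c₀ : ℝ, 0 < c₀ ∧
      ∀ V χ v c : ℝ → ℝ,
        (∀ ⦃a b : ℝ⦄, 0 < a → a ≤ b → V a ≤ V b) →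
        (∀ s : ℝ, 0 < s → 0 ≤ V s) →
        (∀ ⦃a b : ℝ⦄, 0 < a → a ≤ b → χ a ≤ χ b) →
        (∀ s : ℝ, 0 < s → 0 ≤ χ s) →
        (∀ s : ℝ, 0 < s → 0 ≤ v s) →
        (∀ s : ℝ, 0 < s → 0 ≤ c s) →
        (∀ a b : ℝ, 0 < a → a ≤ b → IntervalIntegrable v volume a b) →
        (∀ a b : ℝ, 0 < a → a ≤ b → IntervalIntegrable c volume a b) →
        (∀ a b : ℝ, 0 < a → a ≤ b → V b - V a = ∫ s in a..b, v s) →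
        (∀ a b : ℝ, 0 < a → a ≤ b → χ b - χ a = ∫ s in a..b, c s) →
        (∀ᵐ s : ℝ ∂volume, 0 < s →
          (n / 2 : ℝ) * V s - s / 2 * v s = χ s - 2 / s * c s) →
        (∀ᵐ s : ℝ ∂volume, 0 < s → χ s ≤ (n / 2 : ℝ) * V s) →
        ∀ t : ℝ, c₀ ≤ t → V (t + 1) ≤ 2 * V t := by
  have hn' : (1 : ℝ) ≤ n := by exact_mod_cast hn
  refine ⟨8 * n, by linarith, ?_⟩
  intro V χ v c hV hV0 hχ hχ0 hv hc hvi hci hVv hχc hsol hbd t ht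
  have ht0 : 0 < t := by linarith
  obtain ⟨b, hb, htb, hbt⟩ :=
    (Measure.dense_of_ae hbd).exists_between (show t + 1 < t + 2 by linarith)
  have hb0 : 0 < b := by linarith
  have hχb : χ b ≤ (n / 2 : ℝ) * V b := hb hb0
  have htb' : t ≤ b := by linarith
  have hpt : ∀ᵐ s : ℝ ∂volume, s ∈ Set.Icc t b → v s ≤ n * V b / t + 4 / t ^ 2 * c s := by
    filter_upwards [hsol] with s hs hst
    have hs0 : 0 < s := lt_of_lt_of_le ht0 hst.1
    have h1 := hs hs0
    have hv_eq : v s = (n * V s - 2 * χ s) / s + 4 / s ^ 2 * c s := by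
      field_simp at h1 ⊢
      linarith
    have hVs : V s ≤ V b := hV hs0 hst.2
    have h2 : (n * V s - 2 * χ s) / s ≤ n * V b / t := by
      have hnum : n * V s - 2 * χ s ≤ n * V b := by
        have := mul_le_mul_of_nonneg_left hVs (show (0 : ℝ) ≤ n by linarith)
        linarith [hχ0 s hs0]
      exact div_le_div₀ (mul_nonneg (by linarith) (hV0 b hb0)) hnum ht0 hst.1
    have h3 : 4 / s ^ 2 * c s ≤ 4 / t ^ 2 * c s := by
      refine mul_le_mul_of_nonneg_right ?_ (hc s hs0)
      have := hst.1
      gcongr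
    linarith
  have hint : ∫ s in t..b, v s ≤ ∫ s in t..b, (n * V b / t + 4 / t ^ 2 * c s) := by
    refine intervalIntegral.integral_mono_ae_restrict htb' (hvi t b ht0 htb')
      (intervalIntegrable_const.add ((hci t b ht0 htb').const_mul _)) ?_
    exact (ae_restrict_iff' measurableSet_Icc).2 hpt
  rw [intervalIntegral.integral_add intervalIntegrable_const ((hci t b ht0 htb').const_mul _),
    intervalIntegral.integral_const, intervalIntegral.integral_const_mul, ← hVv t b ht0 htb',
    ← hχc t b ht0 htb', smul_eq_mul] at hint
  have hVb := hV0 b hb0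
  have hA : (b - t) * (n * V b / t) ≤ V b / 4 := by
    have h1 : n * V b / t ≤ V b / 8 := by
      rw [div_le_div_iff₀ ht0 (by norm_num)]
      nlinarith
    have h0 : 0 ≤ n * V b / t := by positivity
    nlinarith
  have hB : 4 / t ^ 2 * (χ b - χ t) ≤ V b / 4 := by
    have h1 : χ b - χ t ≤ (n / 2 : ℝ) * V b := by linarith [hχ0 t ht0]
    have h2 : 4 / t ^ 2 * (χ b - χ t) ≤ 4 / t ^ 2 * ((n / 2 : ℝ) * V b) := by gcongr
    have h3 : 4 / t ^ 2 * ((n / 2 : ℝ) * V b) = (2 * n / t ^ 2) * V b := by ring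
    have h4 : 2 * n / t ^ 2 ≤ 1 / 4 := by
      rw [div_le_div_iff₀ (by positivity) (by norm_num)]
      nlinarith
    nlinarith
  linarith [hV (show 0 < t + 1 by linarith) htb.le]
end

section
/- There exists a constant c₀ > 0 depending only on n such that for every t ≥ c₀ one has V(t+1) − V(t) ≤ (2^n/t + 4n/(t+1)²)·V(t); in particular, V(t+1) − V(t) ≤ C₁·V(t)/t for some constant C₁ depending only on n. -/
open MeasureTheory

/-!
The soliton identity gives `v = n V / s - 2 χ / s + 4 c / s²`. On `[t, t + 1]`, monotonicity of `V`
and `χ ≥ 0` yield `v ≤ n V(t+1) / t + (4 / t²) c` almost everywhere. Integrating, and using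
`χ(t+1) ≤ (n/2) V(t+1)`, gives
`V(t+1) - V(t) ≤ (n / t + 2 n / t²) V(t+1)`.
Solving for `V(t+1)` costs only a factor `1 + O(1/t)`, and since `n + 1 ≤ 2ⁿ` there is room to
absorb it: `V(t+1) - V(t) ≤ (2ⁿ / t) V(t)` as soon as `t ≥ 6 n 2ⁿ`. This is stronger than the
first claimed bound, and gives the second one with `C₁ = 2ⁿ`. Bounding `v` pointwise in this way
makes it unnecessary to differentiate `s⁻ⁿ V(s)`.
-/

/-- The almost everywhere bound `χ ≤ k V` holds at every point, because `V` is continuous and `χ`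
is nondecreasing. -/
lemma chi_le_of_ae {V χ v : ℝ → ℝ} {k : ℝ}
    (hχ : ∀ ⦃a b : ℝ⦄, 0 < a → a ≤ b → χ a ≤ χ b)
    (hvi : ∀ a b : ℝ, 0 < a → a ≤ b → IntervalIntegrable v volume a b)
    (hV : ∀ a b : ℝ, 0 < a → a ≤ b → V b - V a = ∫ s in a..b, v s)
    (hle : ∀ᵐ s : ℝ ∂volume, 0 < s → χ s ≤ k * V s) {b : ℝ} (hb : 0 < b) :
    χ b ≤ k * V b := by
  have hcont : ContinuousOn V (Set.Icc b (b + 1)) := by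
    have h := intervalIntegral.continuousOn_primitive_interval'
      (hvi b (b + 1) hb (by linarith)) Set.left_mem_uIcc
    rw [Set.uIcc_of_le (by linarith)] at h
    refine (h.const_add (V b)).congr fun s hs => ?_
    have := hV b s hb hs.1
    simp only
    linarith
  have htend : Filter.Tendsto (fun s => k * V s) (nhdsWithin b (Set.Ioi b)) (nhds (k * V b)) := by
    have h := (hcont b (Set.left_mem_Icc.2 (by linarith))).mono_left
      (nhdsWithin_le_of_mem (Icc_mem_nhdsGT (show b < b + 1 by linarith)))
    exact h.const_mul k
  -- Points with the almost everywhere bound accumulate at `b` from the right.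
  have hfreq : ∃ᶠ s in nhdsWithin b (Set.Ioi b), χ b ≤ k * V s := by
    rw [(nhdsGT_basis b).frequently_iff]
    intro d hd
    have hpos : (volume (Set.Ioo b d)) ≠ 0 := by
      simpa using hd
    obtain ⟨s, hs, hs'⟩ := ((frequently_ae_mem_iff.2 hpos).and_eventually hle).exists
    exact ⟨s, hs, (hχ hb hs.1.le).trans (hs' (hb.trans hs.1))⟩
  exact ge_of_tendsto_of_frequently htend hfreq

/-- Increment bound (Section 8): there are constants `c₀ > 0` and `C₁` depending
only on `n` such that, for any nondecreasing nonnegative `V, χ` with a.e.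
derivatives `v, c` satisfying the soliton identity and the bound
`χ(s) ≤ (n/2)V(s)`, for all `t ≥ c₀` one has
`V(t+1) - V(t) ≤ (2ⁿ/t + 4n/(t+1)²) V(t)`, and in particular
`V(t+1) - V(t) ≤ C₁ V(t)/t`. -/
theorem volume_increment_bound (n : ℕ) (hn : 1 ≤ n) :
    ∃ c₀ C₁ : ℝ, 0 < c₀ ∧
      ∀ V χ v c : ℝ → ℝ,
        (∀ ⦃a b : ℝ⦄, 0 < a → a ≤ b → V a ≤ V b) →
        (∀ s : ℝ, 0 < s → 0 ≤ V s) →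
        (∀ ⦃a b : ℝ⦄, 0 < a → a ≤ b → χ a ≤ χ b) →
        (∀ s : ℝ, 0 < s → 0 ≤ χ s) →
        (∀ s : ℝ, 0 < s → 0 ≤ v s) →
        (∀ s : ℝ, 0 < s → 0 ≤ c s) →
        (∀ a b : ℝ, 0 < a → a ≤ b → IntervalIntegrable v volume a b) →
        (∀ a b : ℝ, 0 < a → a ≤ b → IntervalIntegrable c volume a b) →
        (∀ a b : ℝ, 0 < a → a ≤ b → V b - V a = ∫ s in a..b, v s) →
        (∀ a b : ℝ, 0 < a → a ≤ b → χ b - χ a = ∫ s in a..b, c s) →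
        (∀ᵐ s : ℝ ∂volume, 0 < s →
          (n / 2 : ℝ) * V s - s / 2 * v s = χ s - 2 / s * c s) →
        (∀ᵐ s : ℝ ∂volume, 0 < s → χ s ≤ (n / 2 : ℝ) * V s) →
        ∀ t : ℝ, c₀ ≤ t →
          V (t + 1) - V t ≤ (2 ^ n / t + 4 * n / (t + 1) ^ 2) * V t ∧
            V (t + 1) - V t ≤ C₁ * V t / t := by
  have hn1 : (1 : ℝ) ≤ n := by exact_mod_cast hn
  have hp : (n : ℝ) + 1 ≤ 2 ^ n := by exact_mod_cast Nat.lt_two_pow_self (n := n)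
  refine ⟨6 * n * 2 ^ n, 2 ^ n, by positivity, ?_⟩
  intro V χ v c hVm hV0 hχm hχ0 hv0 hc0 hvi hci hV hχ hsol hle t ht
  set p : ℝ := 2 ^ n with hpdef
  have ht12 : 12 ≤ t := by nlinarith
  have ht0 : 0 < t := by linarith
  have hVt := hV0 t ht0
  have hVt1 := hV0 (t + 1) (by linarith)
  have hmono : V t ≤ V (t + 1) := hVm ht0 (by linarith)
  have hchi := chi_le_of_ae hχm hvi hV hle (b := t + 1) (by linarith)
  have hint : V (t + 1) - V t ≤ n * V (t + 1) / t + 4 / t ^ 2 * (χ (t + 1) - χ t) := by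
    rw [hV t (t + 1) ht0 (by linarith), hχ t (t + 1) ht0 (by linarith)]
    have hci' := (hci t (t + 1) ht0 (by linarith)).const_mul (4 / t ^ 2)
    have hk : IntervalIntegrable (fun _ : ℝ => n * V (t + 1) / t) volume t (t + 1) :=
      intervalIntegrable_const
    have : ∫ s in t..(t + 1), (n * V (t + 1) / t + 4 / t ^ 2 * c s)
        = n * V (t + 1) / t + 4 / t ^ 2 * ∫ s in t..(t + 1), c s := by
      rw [intervalIntegral.integral_add hk hci', intervalIntegral.integral_const_mul]
      simp
    rw [← this]
    refine intervalIntegral.integral_mono_ae_restrict (by linarith)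
      (hvi t (t + 1) ht0 (by linarith)) (hk.add hci') ?_
    filter_upwards [ae_restrict_of_ae hsol, ae_restrict_mem measurableSet_Icc] with s hs hmem
    have hs0 : 0 < s := ht0.trans_le hmem.1
    have hv : v s = n * V s / s - 2 * χ s / s + 4 / s ^ 2 * c s := by
      have := hs hs0
      field_simp at this ⊢
      linarith
    have h1 : n * V s / s ≤ n * V (t + 1) / t := by
      have := hVm hs0 hmem.2
      have := hmem.1
      gcongr
    have h2 : 4 / s ^ 2 * c s ≤ 4 / t ^ 2 * c s := by
      have := hc0 s hs0
      have := hmem.1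
      gcongr
    have h3 : 0 ≤ 2 * χ s / s := by
      have := hχ0 s hs0
      positivity
    linarith
  have hkey : t ^ 2 * (V (t + 1) - V t) ≤ (n * t + 2 * n) * V (t + 1) := by
    have h4 : 4 / t ^ 2 * (χ (t + 1) - χ t) ≤ 4 / t ^ 2 * (n / 2 * V (t + 1)) := by
      have := hχ0 t ht0
      gcongr
      linarith
    have h5 := mul_le_mul_of_nonneg_left (hint.trans (add_le_add_right h4 _)) (sq_nonneg t)
    refine h5.trans_eq ?_
    field_simp
    ring
  have hA : (n * t + 2 * n) * t ≤ p * (t ^ 2 - (n * t + 2 * n)) := by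
    -- The slack `p - n ≥ 1` leaves `t²` to absorb `(2 n + n p) t + 2 n p`.
    have h6 : (2 * n + n * p) * t + 2 * n * p ≤ t ^ 2 := by
      have h7 : 2 * n ≤ n * p := by nlinarith
      nlinarith
    nlinarith [sq_nonneg t]
  have hB : 0 < t ^ 2 - (n * t + 2 * n) := by
    have : 0 < (n * t + 2 * n) * t := by positivity
    exact pos_of_mul_pos_right (this.trans_le hA) (by positivity)
  have hmain : t * (V (t + 1) - V t) ≤ p * V t := by
    refine le_of_mul_le_mul_left ?_ hB
    have h8 := mul_le_mul_of_nonneg_right hA hVt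
    have h9 : (t ^ 2 - (n * t + 2 * n)) * (V (t + 1) - V t) ≤ (n * t + 2 * n) * V t := by linarith
    have h10 := mul_le_mul_of_nonneg_left h9 ht0.le
    linarith
  have hfin : V (t + 1) - V t ≤ p * V t / t := by
    rw [le_div_iff₀ ht0]
    linarith
  refine ⟨hfin.trans ?_, hfin⟩
  have h11 : 0 ≤ 4 * n / (t + 1) ^ 2 * V t := by positivity
  rw [add_mul, div_mul_eq_mul_div]
  linarith
end

section
/- Let C > 0 and let y : [0,∞) → ℝ be a positive, nonincreasing, locally Lipschitz function with y(t) → 0 as t → ∞, and suppose that for almost every t ≥ 1 the differential inequality t·y'(t) − 2·y(t)·log(y(t)) ≤ C·y(t−1) holds. Then there exist constants ε > 0 and δ > 0 such that y(t) ≤ δ·e^{−εt} for all t ≥ 1/ε. -/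
/-!
With `L = -log y` the differential inequality reads `t L' ≥ 2 L - C exp (L t - L (t - 1))`. The
line `ε t` is a barrier for `L`. Take `T` with `L ≥ 2 C e + 1` on `[T, ∞)`, and `ε = 1 / (T + 3)`,
so that `L > ε t` on `[T, T + 3]`. If `s` is the first time at which `L s = ε s`, then
`L s - L (s - 1) ≤ ε ≤ 1`, so the right-hand side at `s` is at least `2 L s - C e ≥ (3 / 2) ε s`.
Hence `L' ≥ (5 / 4) ε` almost everywhere near `s`, and `L` would lie strictly below the line just
before `s`, a contradiction. Therefore `y t ≤ exp (-ε t)` for all `t ≥ T`.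

The argument is carried out on `y` itself. The almost-everywhere bound is turned into a bound on
increments by the fundamental theorem of calculus for absolutely continuous functions
(`sub_le_of_ae_hasDerivAt_le`); the contradiction at the touching time is `no_touching`.
-/

open MeasureTheory

/-- A Lipschitz function whose derivative is a.e. at most `m` grows at rate at most `m`. -/
lemma sub_le_of_ae_hasDerivAt_le {y : ℝ → ℝ} {a b m : ℝ} {K : NNReal} (hab : a ≤ b)
    (hlip : LipschitzOnWith K y (Set.Icc a b))
    (hder : ∀ᵐ t : ℝ ∂volume, t ∈ Set.Icc a b → ∀ y' : ℝ, HasDerivAt y y' t → y' ≤ m) :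
    y b - y a ≤ m * (b - a) := by
  have hac : AbsolutelyContinuousOnInterval y a b := by
    apply LipschitzOnWith.absolutelyContinuousOnInterval (K := K)
    rwa [Set.uIcc_of_le hab]
  have hle : ∫ x in a..b, deriv y x ≤ ∫ _ in a..b, m := by
    apply intervalIntegral.integral_mono_ae_restrict hab hac.intervalIntegrable_deriv
      intervalIntegrable_const
    refine (ae_restrict_iff' measurableSet_Icc).2 ?_
    filter_upwards [hac.ae_differentiableAt, hder] with x hx1 hx2 hx
    exact hx2 hx _ (hx1 (by rwa [Set.uIcc_of_le hab])).hasDerivAt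
  rw [hac.integral_deriv_eq_sub, intervalIntegral.integral_const, smul_eq_mul] at hle
  linarith

/-- The graph of `y` cannot reach the barrier `exp (-ε t)` from below at a time `s` with
`ε s > 2 C e`: the differential inequality makes `y` decrease faster than the barrier near `s`. -/
lemma no_touching {C : ℝ} (hC : 0 < C) {y : ℝ → ℝ} {ε s : ℝ}
    (hlip : ∀ a b : ℝ, 0 ≤ a → a ≤ b → ∃ K : NNReal, LipschitzOnWith K y (Set.Icc a b))
    (hcont : ∀ t : ℝ, 0 < t → ContinuousAt y t)
    (hode : ∀ᵐ t : ℝ ∂volume, 1 ≤ t → ∀ y' : ℝ, HasDerivAt y y' t →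
      t * y' - 2 * y t * Real.log (y t) ≤ C * y (t - 1))
    (hε : 0 < ε) (hε1 : ε ≤ 1) (hs : 2 < s) (hM : 2 * C * Real.exp 1 < ε * s)
    (hys : y s = Real.exp (-ε * s))
    (hbelow : ∀ r : ℝ, s - 1 ≤ r → r < s → y r < Real.exp (-ε * r)) : False := by
  set E := Real.exp (-ε * s) with hE
  have hEpos : 0 < E := Real.exp_pos _
  have hshift : ∀ h : ℝ, Real.exp (-ε * (s - h)) = E * Real.exp (ε * h) := by
    intro h
    rw [hE, ← Real.exp_add]
    congr 1
    ring
  have hprev : y (s - 1) ≤ E * Real.exp 1 := by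
    calc y (s - 1) ≤ E * Real.exp (ε * 1) := by
          rw [← hshift]; exact (hbelow (s - 1) le_rfl (by linarith)).le
      _ ≤ E * Real.exp 1 := by gcongr; linarith
  have hcs : ContinuousAt
      (fun t => 2 * y t * Real.log (y t) + C * y (t - 1) + t * (5 / 4 * ε * E)) s := by
    have h1 := hcont s (by linarith)
    have h2 : ContinuousAt (fun t => y (t - 1)) s :=
      ContinuousAt.comp (f := fun t : ℝ => t - 1) (hcont (s - 1) (by linarith)) (by fun_prop)
    have h3 : ContinuousAt (fun t => Real.log (y t)) s := h1.log (by rw [hys]; exact hEpos.ne')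
    exact (((continuousAt_const.mul h1).mul h3).add (continuousAt_const.mul h2)).add
      (continuousAt_id.mul continuousAt_const)
  have hneg : 2 * y s * Real.log (y s) + C * y (s - 1) + s * (5 / 4 * ε * E) < 0 := by
    have hlog : Real.log (y s) = -ε * s := by rw [hys, hE, Real.log_exp]
    rw [hlog, hys]
    have h1 : C * y (s - 1) ≤ C * (E * Real.exp 1) := by gcongr
    have h2 : E * (2 * C * Real.exp 1) < E * (ε * s) := by gcongr
    have h3 : 0 < E * (ε * s) := by positivity
    linarith
  obtain ⟨η, hη, hball⟩ := Metric.eventually_nhds_iff.1 (hcs.eventually (gt_mem_nhds hneg))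
  obtain ⟨h, hh0, hh⟩ := exists_between (lt_min hη (show (0 : ℝ) < 1 / 4 by norm_num))
  have hhη : h < η := hh.trans_le (min_le_left _ _)
  have hh4 : h < 1 / 4 := hh.trans_le (min_le_right _ _)
  obtain ⟨K, hK⟩ := hlip (s - h) s (by linarith) (by linarith)
  have hinc : y s - y (s - h) ≤ -(5 / 4 * ε * E) * (s - (s - h)) := by
    apply sub_le_of_ae_hasDerivAt_le (by linarith) hK
    filter_upwards [hode] with t ht hmem y' hy'
    have h1 := ht (by linarith [hmem.1]) y' hy'
    have h2 := hball (y := t) (by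
      rw [Real.dist_eq, abs_lt]
      constructor <;> linarith [hmem.1, hmem.2])
    have htpos : 0 < t := by linarith [hmem.1]
    refine le_of_mul_le_mul_left ?_ htpos
    linarith
  have hlt := hbelow (s - h) (by linarith) (by linarith)
  rw [hshift] at hlt
  have hx0 : 0 < ε * h := by positivity
  have hx4 : ε * h < 1 / 4 := by nlinarith
  have hexp : Real.exp (ε * h) ≤ 1 + 5 / 4 * (ε * h) := by
    have h1 := (abs_le.1 (Real.abs_exp_sub_one_sub_id_le
      (x := ε * h) (by rw [abs_of_pos hx0]; linarith))).2
    nlinarith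
  have h2 : E * Real.exp (ε * h) ≤ E * (1 + 5 / 4 * (ε * h)) := by gcongr
  rw [hys] at hinc
  linarith

/-- Exponential decay step (Munteanu–Wang argument) in the proof of
Proposition 8.3: if `y : [0,∞) → ℝ` is positive, nonincreasing, locally
Lipschitz, tends to `0` at infinity, and satisfies
`t y'(t) - 2 y(t) log y(t) ≤ C y(t-1)` for a.e. `t ≥ 1`, then
`y(t) ≤ δ e^{-εt}` for all `t ≥ 1/ε`, for some `ε, δ > 0`. -/
theorem exponential_decay_of_diff_ineq
    (C : ℝ) (hC : 0 < C) (y : ℝ → ℝ)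
    (hpos : ∀ t : ℝ, 0 ≤ t → 0 < y t)
    (hmono : ∀ ⦃a b : ℝ⦄, 0 ≤ a → a ≤ b → y b ≤ y a)
    (hlip : ∀ a b : ℝ, 0 ≤ a → a ≤ b → ∃ K : NNReal, LipschitzOnWith K y (Set.Icc a b))
    (hlim : Filter.Tendsto y Filter.atTop (nhds 0))
    (hode : ∀ᵐ t : ℝ ∂volume, 1 ≤ t → ∀ y' : ℝ, HasDerivAt y y' t →
      t * y' - 2 * y t * Real.log (y t) ≤ C * y (t - 1)) :
    ∃ ε : ℝ, 0 < ε ∧ ∃ δ : ℝ, 0 < δ ∧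
      ∀ t : ℝ, 1 / ε ≤ t → y t ≤ δ * Real.exp (-ε * t) := by
  have hcont : ∀ t : ℝ, 0 < t → ContinuousAt y t := by
    intro t ht
    obtain ⟨K, hK⟩ := hlip 0 (t + 1) le_rfl (by linarith)
    exact hK.continuousOn.continuousAt (Icc_mem_nhds ht (by linarith))
  obtain ⟨T₀, hT₀⟩ := Filter.eventually_atTop.1
    (hlim.eventually (gt_mem_nhds (Real.exp_pos (-(2 * C * Real.exp 1 + 1)))))
  set T := max T₀ 1 with hT
  have hT1 : 1 ≤ T := le_max_right _ _
  have hsmall : ∀ t, T ≤ t → y t < Real.exp (-(2 * C * Real.exp 1 + 1)) := fun t ht =>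
    hT₀ t ((le_max_left _ _).trans ht)
  set ε := 1 / (T + 3) with hεdef
  have hε : 0 < ε := by positivity
  have hεT : ε * (T + 3) = 1 := by rw [hεdef]; field_simp
  have hε1 : ε ≤ 1 := by nlinarith
  refine ⟨ε, hε, 1, one_pos, fun t₁ ht₁ => ?_⟩
  have hTt : T ≤ t₁ := by
    rw [hεdef, one_div_one_div] at ht₁
    linarith
  rw [one_mul]
  by_contra! hcon
  have hcompact : IsCompact {t | t ∈ Set.Icc T t₁ ∧ Real.exp (-ε * t) ≤ y t} := by
    refine isCompact_Icc.of_isClosed_subset ?_ (fun t ht => ht.1)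
    refine isClosed_Icc.isClosed_le (by fun_prop) (fun t ht => ?_)
    exact (hcont t (by linarith [ht.1])).continuousWithinAt
  -- `s` is the first time in `[T, t₁]` at which `y` is on or above the barrier.
  obtain ⟨s, ⟨⟨hTs, hst⟩, hge⟩, hleast⟩ :=
    hcompact.exists_isLeast ⟨t₁, ⟨hTt, le_rfl⟩, hcon.le⟩
  have hbelow : ∀ r : ℝ, T ≤ r → r < s → y r < Real.exp (-ε * r) := by
    intro r hr hrs
    by_contra! hr'
    exact absurd (hleast ⟨⟨hr, hrs.le.trans hst⟩, hr'⟩) (not_le.2 hrs)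
  have hM : 2 * C * Real.exp 1 + 1 < ε * s := by
    have := Real.exp_lt_exp.1 (hge.trans_lt (hsmall s hTs))
    linarith
  have hCe : 0 < 2 * C * Real.exp 1 := by positivity
  have hs : T + 3 < s := by
    refine lt_of_mul_lt_mul_left ?_ hε.le
    linarith
  have hys : y s = Real.exp (-ε * s) := by
    refine le_antisymm ?_ hge
    by_contra! hlt
    have hexpc : ContinuousAt (fun t => Real.exp (-ε * t)) s := by fun_prop
    have hev := hexpc.eventually_lt (hcont s (by linarith)) hlt
    obtain ⟨r, ⟨hr1, hr2⟩, hr3⟩ := (((hev.and (lt_mem_nhds (show T < s by linarith))).filter_mono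
      nhdsWithin_le_nhds).and (self_mem_nhdsWithin (s := Set.Iio s))).exists
    exact absurd (hbelow r hr2.le hr3) (not_lt.2 hr1.le)
  exact no_touching hC hlip hcont hode hε hε1 (by linarith) (by linarith) hys
    (fun r hr hrs => hbelow r (by linarith) hrs)
end

section
/- Let n ≥ 3 be an integer, K > 0, R > 0, and let W : (0, R] → ℝ be a nondecreasing nonnegative function satisfying (W(s/2))^{(n−2)/n} ≤ K·s^{−2}·W(s) for every s ∈ (0, R], and such that liminf_{s→0⁺} W(s)/sⁿ > 0. Then W(R) ≥ c(n)·K^{−n/2}·Rⁿ, where c(n) > 0 is a constant depending only on n (for instance c(n) = 2^{−n(n−2)/2} works). -/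
/-!
Put `A = 2^{-n(n-2)/2} K^{-n/2}` and `a = (n-2)/n ∈ (0,1)`. The constant `A` is chosen so that
`s ↦ A sⁿ` satisfies the iteration inequality with equality (`extremal_constant`). Hence the
normalised ratio `V(s) = W(s) / (A sⁿ)` satisfies `V(s/2)^a ≤ V(s)` (`ratio_step`), which iterates
to `V(R/2^k)^(a^k) ≤ V(R)` (`ratio_iterate`). The positive lower limit of `W(s)/sⁿ` gives a fixed
`d > 0` with `d ≤ V(R/2^k)` for large `k`, and `d^(a^k) → d^0 = 1`, so `1 ≤ V(R)`.
-/

open MeasureTheory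

/-- `A sⁿ` turns the iteration inequality into an equality for this value of `A`. -/
lemma extremal_constant (n : ℕ) (hn : 3 ≤ n) (K s A : ℝ) (hK : 0 < K) (hs : 0 < s)
    (hA : A = (2 : ℝ) ^ (-((n : ℝ) * ((n : ℝ) - 2)) / 2) * K ^ (-(n : ℝ) / 2)) :
    (A * (s / 2) ^ n) ^ (((n : ℝ) - 2) / n) = K / s ^ 2 * (A * s ^ n) := by
  have hn0 : (n : ℝ) ≠ 0 := by positivity
  have hApos : 0 < A := by rw [hA]; positivity
  have hlogA : Real.log A = -((n : ℝ) * ((n : ℝ) - 2)) / 2 * Real.log 2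
      + -(n : ℝ) / 2 * Real.log K := by
    rw [hA, Real.log_mul (by positivity) (by positivity), Real.log_rpow (by norm_num),
      Real.log_rpow hK]
  apply Real.log_injOn_pos (Set.mem_Ioi.2 (by positivity)) (Set.mem_Ioi.2 (by positivity))
  rw [Real.log_rpow (by positivity), Real.log_mul (by positivity) (by positivity), Real.log_pow,
    Real.log_div (by positivity) (by norm_num), Real.log_mul (by positivity) (by positivity),
    Real.log_div (by positivity) (by positivity), Real.log_mul (by positivity) (by positivity),
    Real.log_pow, Real.log_pow, hlogA]
  push_cast
  field_simp
  ring

lemma ratio_step (n : ℕ) (hn : 3 ≤ n) (K s A w w' : ℝ) (hK : 0 < K) (hs : 0 < s)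
    (hA : A = (2 : ℝ) ^ (-((n : ℝ) * ((n : ℝ) - 2)) / 2) * K ^ (-(n : ℝ) / 2))
    (hw' : 0 ≤ w') (h : w' ^ (((n : ℝ) - 2) / n) ≤ K / s ^ 2 * w) :
    (w' / (A * (s / 2) ^ n)) ^ (((n : ℝ) - 2) / n) ≤ w / (A * s ^ n) := by
  have hApos : 0 < A := by rw [hA]; positivity
  rw [Real.div_rpow hw' (by positivity), extremal_constant n hn K s A hK hs hA]
  calc _ ≤ (K / s ^ 2 * w) / (K / s ^ 2 * (A * s ^ n)) := by gcongr
    _ = _ := mul_div_mul_left _ _ (by positivity)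

lemma ratio_iterate (V : ℝ → ℝ) (a R : ℝ) (ha : 0 ≤ a) (hR : 0 < R)
    (hV : ∀ s ∈ Set.Ioc 0 R, 0 ≤ V s)
    (hstep : ∀ s ∈ Set.Ioc 0 R, V (s / 2) ^ a ≤ V s) (k : ℕ) :
    V (R / 2 ^ k) ^ (a ^ k) ≤ V R := by
  have hmem (j : ℕ) : R / 2 ^ j ∈ Set.Ioc 0 R :=
    ⟨by positivity, div_le_self hR.le (one_le_pow₀ (by norm_num))⟩
  induction k with
  | zero => simp
  | succ k ih =>
    have hhalf : R / 2 ^ (k + 1) = R / 2 ^ k / 2 := by rw [pow_succ, div_div]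
    have hnn : 0 ≤ V (R / 2 ^ k / 2) := hhalf ▸ hV _ (hmem (k + 1))
    rw [hhalf, pow_succ' a, Real.rpow_mul hnn]
    exact (Real.rpow_le_rpow (Real.rpow_nonneg hnn _) (hstep _ (hmem k)) (by positivity)).trans ih

/-- Dyadic iteration underlying Lemma 8.1: if `W : (0, R] → ℝ` is nondecreasing
and nonnegative, satisfies `(W(s/2))^{(n-2)/n} ≤ K s⁻² W(s)` on `(0, R]`, and
`liminf_{s→0⁺} W(s)/sⁿ > 0`, then `W(R) ≥ 2^{-n(n-2)/2} K^{-n/2} Rⁿ`. -/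
theorem dyadic_volume_iteration
    (n : ℕ) (hn : 3 ≤ n) (K R : ℝ) (hK : 0 < K) (hR : 0 < R)
    (W : ℝ → ℝ)
    (hWmono : ∀ ⦃a b : ℝ⦄, a ∈ Set.Ioc 0 R → b ∈ Set.Ioc 0 R → a ≤ b → W a ≤ W b)
    (hWnonneg : ∀ s ∈ Set.Ioc 0 R, 0 ≤ W s)
    (hiter : ∀ s ∈ Set.Ioc 0 R, (W (s / 2)) ^ (((n : ℝ) - 2) / n) ≤ K / s ^ 2 * W s)
    (hliminf : ∃ c : ℝ, 0 < c ∧ ∀ᶠ s in nhdsWithin 0 (Set.Ioi 0), c ≤ W s / s ^ n) :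
    (2 : ℝ) ^ (-((n : ℝ) * ((n : ℝ) - 2)) / 2) * K ^ (-(n : ℝ) / 2) * R ^ n ≤ W R := by
  obtain ⟨c, hc, hev⟩ := hliminf
  obtain ⟨A, hA⟩ : ∃ A : ℝ,
      A = (2 : ℝ) ^ (-((n : ℝ) * ((n : ℝ) - 2)) / 2) * K ^ (-(n : ℝ) / 2) := ⟨_, rfl⟩
  rw [← hA]
  have hApos : 0 < A := by rw [hA]; positivity
  have hn3 : (3 : ℝ) ≤ n := by exact_mod_cast hn
  have ha0 : 0 ≤ ((n : ℝ) - 2) / n := div_nonneg (by linarith) (by linarith)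
  have ha1 : ((n : ℝ) - 2) / n < 1 := by rw [div_lt_one (by linarith)]; linarith
  have hbound (k : ℕ) := ratio_iterate (fun s => W s / (A * s ^ n)) _ R ha0 hR
    (fun s hs => by
      have := hs.1
      exact div_nonneg (hWnonneg s hs) (by positivity))
    (fun s hs => ratio_step n hn K s A _ _ hK hs.1 hA
      (hWnonneg _ ⟨half_pos hs.1, (half_le_self hs.1.le).trans hs.2⟩) (hiter s hs)) k
  have hscale : Filter.Tendsto (fun k : ℕ => R / 2 ^ k) Filter.atTop
      (nhdsWithin 0 (Set.Ioi 0)) := by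
    refine tendsto_nhdsWithin_iff.2 ⟨?_, Filter.Eventually.of_forall fun k => ?_⟩
    · exact Filter.Tendsto.div_atTop tendsto_const_nhds
        (tendsto_pow_atTop_atTop_of_one_lt (by norm_num))
    · exact Set.mem_Ioi.2 (by positivity)
  have hlim : Filter.Tendsto (fun k : ℕ => (c / A) ^ ((((n : ℝ) - 2) / n) ^ k)) Filter.atTop
      (nhds 1) := by
    have := (tendsto_const_nhds (x := c / A)).rpow (tendsto_pow_atTop_nhds_zero_of_lt_one ha0 ha1)
      (Or.inl (by positivity))
    rwa [Real.rpow_zero] at this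
  have hone : 1 ≤ W R / (A * R ^ n) := by
    refine le_of_tendsto hlim ?_
    filter_upwards [hscale.eventually hev] with k hk
    refine le_trans (Real.rpow_le_rpow (by positivity) ?_ (by positivity)) (hbound k)
    rw [mul_comm A, ← div_div]
    gcongr
  rwa [one_le_div (by positivity)] at hone
end
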